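/- If A_F > 0 and φ''_{2F} ≤ 0, then L^qcf : U → U is invertible (as a bijection of U onto the subspace of vectors vanishing at j = ±N), and for every f with f_{±N} = 0 the solution u ∈ U of (L^qcf u)_j = f_j for j = −N+1,…,N−1 satisfies max_{−N+1 ≤ ℓ ≤ N−1} |u''_ℓ| ≤ (1/A_F) max_{−N+1 ≤ j ≤ N−1} |f_j|; i.e., ‖(L^qcf)^{−1}‖_{L(U^{0,∞}, U^{2,∞})} ≤ 1/A_F. If A_F = 0, then L^qcf is singular. -/

import Mathlib

/-!
In terms of `w = u''` the operator satisfies a maximum principle: on `K < |j| ≤ N - 1` it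
is `-A_F w_j`, and on `|j| ≤ K` it is `-A_F w_j - φ''_{2F} (w_{j+1} - 2 w_j + w_{j-1})`
(`lqcfFun_atomistic`). Since `φ''_{2F} ≤ 0`, at a node where `|w|` is maximal both terms have the
same sign, so `A_F max |w| ≤ max |f|` (`D2_bound`). This is the stability estimate; it also makes
the kernel trivial, because `w = 0` and the boundary conditions force `u = 0`. On a
finite-dimensional space injectivity gives surjectivity, hence unique solvability
(`exists_solution`). When `A_F = 0` only second differences of `w` survive, and these vanish for
the parabola `N² - j²`, whose `w` is constant (`exists_kernel`).
-/

open Finset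

noncomputable section

/-- lattice spacing ε = 1/N -/
def eps (N : ℕ) : ℝ := 1 / N

/-- membership in the displacement space U -/
def memU (N : ℕ) (u : ℤ → ℝ) : Prop :=
  ∀ j : ℤ, ((N : ℤ) ≤ j ∨ j ≤ -(N : ℤ)) → u j = 0

/-- centered second difference u''_ℓ = (u_{ℓ+1} - 2u_ℓ + u_{ℓ-1})/ε² -/
def D2 (N : ℕ) (u : ℤ → ℝ) (ℓ : ℤ) : ℝ :=
  (u (ℓ + 1) - 2 * u ℓ + u (ℓ - 1)) / (eps N) ^ 2

/-- the linearized force-based quasicontinuum operator (L^qcf v)_j -/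
def lqcfFun (N K : ℕ) (φF φ2F : ℝ) (v : ℤ → ℝ) (j : ℤ) : ℝ :=
  if -(N : ℤ) + 1 ≤ j ∧ j ≤ (N : ℤ) - 1 then
    if -(K : ℤ) ≤ j ∧ j ≤ (K : ℤ) then
      φF * (-v (j + 1) + 2 * v j - v (j - 1)) / (eps N) ^ 2
        + φ2F * (-v (j + 2) + 2 * v j - v (j - 2)) / (eps N) ^ 2
    else
      (φF + 4 * φ2F) * (-v (j + 1) + 2 * v j - v (j - 1)) / (eps N) ^ 2
  else 0

/-- In the atomistic region the next-nearest-neighbour stencil is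
`-ε² (w_{j+1} + 2 w_j + w_{j-1})` with `w = u''`, so the operator is `-A_F w` minus `φ''_{2F}`
times the undivided second difference of `w`. -/
lemma lqcfFun_atomistic {N K : ℕ} (hK2 : (K : ℤ) ≤ (N : ℤ) - 2) (φF φ2F : ℝ) (v : ℤ → ℝ)
    {j : ℤ} (h1 : -(K : ℤ) ≤ j) (h2 : j ≤ (K : ℤ)) :
    lqcfFun N K φF φ2F v j =
      -(φF + 4 * φ2F) * D2 N v j - φ2F * (D2 N v (j + 1) - 2 * D2 N v j + D2 N v (j - 1)) := by
  unfold lqcfFun D2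
  rw [if_pos (by omega), if_pos ⟨h1, h2⟩]
  rw [show j + 1 + 1 = j + 2 by ring, show j + 1 - 1 = j by ring, show j - 1 + 1 = j by ring,
    show j - 1 - 1 = j - 2 by ring]
  ring

lemma lqcfFun_continuum {N K : ℕ} (φF φ2F : ℝ) (v : ℤ → ℝ)
    {j : ℤ} (hj : -(N : ℤ) + 1 ≤ j ∧ j ≤ (N : ℤ) - 1) (h : ¬ (-(K : ℤ) ≤ j ∧ j ≤ (K : ℤ))) :
    lqcfFun N K φF φ2F v j = -(φF + 4 * φ2F) * D2 N v j := by
  unfold lqcfFun D2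
  rw [if_pos hj, if_neg h]
  ring

lemma lqcfFun_add (N K : ℕ) (φF φ2F : ℝ) (u v : ℤ → ℝ) (j : ℤ) :
    lqcfFun N K φF φ2F (u + v) j = lqcfFun N K φF φ2F u j + lqcfFun N K φF φ2F v j := by
  unfold lqcfFun
  simp only [Pi.add_apply]
  split_ifs <;> ring

lemma lqcfFun_smul (N K : ℕ) (φF φ2F c : ℝ) (u : ℤ → ℝ) (j : ℤ) :
    lqcfFun N K φF φ2F (c • u) j = c * lqcfFun N K φF φ2F u j := by
  unfold lqcfFun
  simp only [Pi.smul_apply, smul_eq_mul]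
  split_ifs <;> ring

/-- The discrete maximum principle for `w = u''`: evaluating the equation where `|w|` is largest
bounds `A_F |w|` by `|L u|` there. -/
lemma D2_bound {N K : ℕ} (hK2 : (K : ℤ) ≤ (N : ℤ) - 2) {φF φ2F : ℝ}
    (hφ2F : φ2F ≤ 0) (hA : 0 < φF + 4 * φ2F) {u : ℤ → ℝ} {M : ℝ}
    (hM : ∀ j ∈ Icc (-(N : ℤ) + 1) ((N : ℤ) - 1), |lqcfFun N K φF φ2F u j| ≤ M) :
    ∀ ℓ ∈ Icc (-(N : ℤ) + 1) ((N : ℤ) - 1), |D2 N u ℓ| ≤ 1 / (φF + 4 * φ2F) * M := by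
  intro ℓ hℓ
  obtain ⟨m, hm, hmax⟩ := exists_max_image (Icc (-(N : ℤ) + 1) ((N : ℤ) - 1))
    (fun j => |D2 N u j|) ⟨ℓ, hℓ⟩
  have key : (φF + 4 * φ2F) * |D2 N u m| ≤ M := by
    refine le_trans ?_ (hM m hm)
    by_cases h : -(K : ℤ) ≤ m ∧ m ≤ (K : ℤ)
    · rw [lqcfFun_atomistic hK2 φF φ2F u h.1 h.2]
      -- `K ≤ N - 2` keeps both neighbours of `m` among the nodes where `u''` is controlled
      have hp := abs_le.1 (hmax (m + 1) (by rw [mem_Icc]; omega))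
      have hq := abs_le.1 (hmax (m - 1) (by rw [mem_Icc]; omega))
      rcases abs_cases (D2 N u m) with ⟨e, _⟩ | ⟨e, _⟩
      · rw [e] at hp hq ⊢
        refine le_trans ?_ (neg_le_abs _)
        nlinarith [hp.2, hq.2]
      · rw [e] at hp hq ⊢
        refine le_trans ?_ (le_abs_self _)
        nlinarith [hp.1, hq.1]
    · rw [lqcfFun_continuum φF φ2F u (mem_Icc.1 hm) h, abs_mul, abs_neg, abs_of_pos hA]
  rw [one_div, inv_mul_eq_div, le_div_iff₀ hA, mul_comm]
  exact (mul_le_mul_of_nonneg_left (hmax ℓ hℓ) hA.le).trans key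

/-- A displacement with `u'' = 0` is linear, hence zero by the two boundary conditions. -/
lemma eq_zero_of_D2_eq_zero {N : ℕ} (hN : 2 ≤ N) {u : ℤ → ℝ} (hu : memU N u)
    (h : ∀ ℓ ∈ Icc (-(N : ℤ) + 1) ((N : ℤ) - 1), D2 N u ℓ = 0) : u = 0 := by
  have hN0 : (0 : ℝ) < N := by exact_mod_cast (by omega : 0 < N)
  have heps : eps N ^ 2 ≠ 0 := by
    unfold eps
    positivity
  have hlin : ∀ k : ℕ, k + 1 ≤ 2 * N →
      u (-(N : ℤ) + k) = k * u (-(N : ℤ) + 1) ∧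
      u (-(N : ℤ) + k + 1) = (k + 1) * u (-(N : ℤ) + 1) := by
    intro k
    induction k with
    | zero =>
      intro _
      simp [hu (-(N : ℤ)) (Or.inr le_rfl)]
    | succ k ih =>
      intro hk
      obtain ⟨h1, h2⟩ := ih (by omega)
      have h3 := h (-(N : ℤ) + k + 1) (by rw [mem_Icc]; omega)
      unfold D2 at h3
      rw [div_eq_zero_iff, or_iff_left heps, add_sub_cancel_right, h1, h2] at h3
      push_cast
      rw [← add_assoc]
      refine ⟨h2, ?_⟩
      linarith
  have hc : u (-(N : ℤ) + 1) = 0 := by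
    have h1 := (hlin (2 * N - 1) (by omega)).2
    rw [hu _ (Or.inl (by omega))] at h1
    have h2 : ((2 * N - 1 : ℕ) : ℝ) + 1 ≠ 0 := by positivity
    exact (mul_eq_zero.1 h1.symm).resolve_left h2
  funext j
  by_cases hj : (N : ℤ) ≤ j ∨ j ≤ -(N : ℤ)
  · exact hu j hj
  · have h1 := (hlin (j + N).toNat (by omega)).1
    rw [hc, mul_zero] at h1
    rwa [show -(N : ℤ) + ((j + N).toNat : ℤ) = j by omega] at h1

lemma eq_zero_of_lqcfFun_eq_zero {N K : ℕ} (hN : 2 ≤ N) (hK2 : (K : ℤ) ≤ (N : ℤ) - 2)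
    {φF φ2F : ℝ} (hφ2F : φ2F ≤ 0) (hA : 0 < φF + 4 * φ2F) {u : ℤ → ℝ} (hu : memU N u)
    (h : ∀ j ∈ Icc (-(N : ℤ) + 1) ((N : ℤ) - 1), lqcfFun N K φF φ2F u j = 0) : u = 0 := by
  refine eq_zero_of_D2_eq_zero hN hu fun ℓ hℓ => ?_
  have := D2_bound hK2 hφ2F hA (M := 0) (fun j hj => by rw [h j hj, abs_zero]) ℓ hℓ
  rw [mul_zero] at this
  exact abs_nonpos_iff.1 this

/-- Extension by zero of the values at the interior nodes, an element of the displacement space. -/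
def extZero (N : ℕ) : (Icc (-(N : ℤ) + 1) ((N : ℤ) - 1) → ℝ) →ₗ[ℝ] (ℤ → ℝ) where
  toFun x j := if h : j ∈ Icc (-(N : ℤ) + 1) ((N : ℤ) - 1) then x ⟨j, h⟩ else 0
  map_add' x y := by
    funext j
    by_cases h : j ∈ Icc (-(N : ℤ) + 1) ((N : ℤ) - 1) <;>
      simp only [Pi.add_apply, h, dite_true, dite_false, add_zero]
  map_smul' c x := by
    funext j
    by_cases h : j ∈ Icc (-(N : ℤ) + 1) ((N : ℤ) - 1) <;>
      simp only [Pi.smul_apply, h, dite_true, dite_false, smul_zero, RingHom.id_apply]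

lemma memU_extZero (N : ℕ) (x : Icc (-(N : ℤ) + 1) ((N : ℤ) - 1) → ℝ) : memU N (extZero N x) := by
  intro j hj
  exact dif_neg (by rw [mem_Icc]; omega)

/-- The operator `L^qcf` in interior coordinates, as an endomorphism of a finite-dimensional
space. -/
def lqcfLin (N K : ℕ) (φF φ2F : ℝ) :
    (Icc (-(N : ℤ) + 1) ((N : ℤ) - 1) → ℝ) →ₗ[ℝ] (Icc (-(N : ℤ) + 1) ((N : ℤ) - 1) → ℝ) where
  toFun x i := lqcfFun N K φF φ2F (extZero N x) i
  map_add' x y := by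
    funext i
    rw [map_add, lqcfFun_add, Pi.add_apply]
  map_smul' c x := by
    funext i
    rw [map_smul, lqcfFun_smul, Pi.smul_apply, smul_eq_mul, RingHom.id_apply]

lemma exists_solution {N K : ℕ} (hN : 2 ≤ N) (hK2 : (K : ℤ) ≤ (N : ℤ) - 2)
    {φF φ2F : ℝ} (hφ2F : φ2F ≤ 0) (hA : 0 < φF + 4 * φ2F) (f : ℤ → ℝ) :
    ∃ u : ℤ → ℝ, memU N u ∧
      ∀ j ∈ Icc (-(N : ℤ) + 1) ((N : ℤ) - 1), lqcfFun N K φF φ2F u j = f j := by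
  have hinj : Function.Injective (lqcfLin N K φF φ2F) := by
    rw [← LinearMap.ker_eq_bot, LinearMap.ker_eq_bot']
    intro x hx
    have h0 : extZero N x = 0 :=
      eq_zero_of_lqcfFun_eq_zero hN hK2 hφ2F hA (memU_extZero N x)
        fun j hj => congrFun hx ⟨j, hj⟩
    funext i
    have h1 : extZero N x i = x i := dif_pos i.2
    rw [← h1, h0]
    rfl
  obtain ⟨x, hx⟩ := LinearMap.injective_iff_surjective.1 hinj (fun i => f i)
  exact ⟨extZero N x, memU_extZero N x, fun j hj => congrFun hx ⟨j, hj⟩⟩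

/-- The parabola `N² - j²`, cut off at `±N`, is a kernel vector for `A_F = 0`: its `u''` is
constant on the interior nodes. -/
lemma exists_kernel {N K : ℕ} (hN : 2 ≤ N) (hK2 : (K : ℤ) ≤ (N : ℤ) - 2)
    {φF φ2F : ℝ} (hA : φF + 4 * φ2F = 0) :
    ∃ v : ℤ → ℝ, memU N v ∧ v ≠ 0 ∧
      ∀ j ∈ Icc (-(N : ℤ) + 1) ((N : ℤ) - 1), lqcfFun N K φF φ2F v j = 0 := by
  set v : ℤ → ℝ := fun j => if (N : ℤ) ≤ j ∨ j ≤ -(N : ℤ) then 0 else (N : ℝ) ^ 2 - (j : ℝ) ^ 2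
    with hv
  -- the cut-off agrees with the parabola up to and including the boundary nodes
  have hval : ∀ j : ℤ, -(N : ℤ) ≤ j → j ≤ N → v j = (N : ℝ) ^ 2 - (j : ℝ) ^ 2 := by
    intro j h1 h2
    simp only [hv]
    split_ifs with h
    · have : j = N ∨ j = -(N : ℤ) := by omega
      rcases this with rfl | rfl <;> simp
    · rfl
  have hD : ∀ j : ℤ, -(N : ℤ) + 1 ≤ j → j ≤ (N : ℤ) - 1 → D2 N v j = -2 / eps N ^ 2 := by
    intro j h1 h2
    unfold D2
    rw [hval j (by omega) (by omega), hval (j + 1) (by omega) (by omega),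
      hval (j - 1) (by omega) (by omega)]
    push_cast
    ring
  refine ⟨v, fun j hj => if_pos hj, fun h0 => ?_, fun j hj => ?_⟩
  · have h1 := hval 0 (by omega) (by omega)
    rw [h0] at h1
    have hN0 : (0 : ℝ) < N := by exact_mod_cast (by omega : 0 < N)
    have h2 : (0 : ℝ) < (N : ℝ) ^ 2 := by positivity
    simp only [Pi.zero_apply, Int.cast_zero] at h1
    linarith
  · rw [mem_Icc] at hj
    by_cases h : -(K : ℤ) ≤ j ∧ j ≤ (K : ℤ)
    · rw [lqcfFun_atomistic hK2 φF φ2F v h.1 h.2, hA, hD j hj.1 hj.2,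
        hD (j + 1) (by omega) (by omega), hD (j - 1) (by omega) (by omega)]
      ring
    · rw [lqcfFun_continuum φF φ2F v hj h, hA]
      ring

/-- Sharp stability of the QCF operator: if A_F > 0 and φ''_{2F} ≤ 0 then L^qcf is
invertible (a bijection of U onto the vectors vanishing at ±N), the solution of
L^qcf u = f satisfies ‖u''‖_{ℓ^∞} ≤ (1/A_F)‖f‖_{ℓ^∞}, i.e.
‖(L^qcf)^{-1}‖_{L(U^{0,∞},U^{2,∞})} ≤ 1/A_F; and if A_F = 0 then L^qcf is singular. -/
theorem stmt4 (N K : ℕ) (hN : 2 ≤ N) (hK1 : 1 ≤ K) (hK2 : (K : ℤ) ≤ (N : ℤ) - 2)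
    (φF φ2F : ℝ) (hφ2F : φ2F ≤ 0) :
    (0 < φF + 4 * φ2F →
      (∀ f : ℤ → ℝ, memU N f →
        ∃! u : ℤ → ℝ, memU N u ∧
          ∀ j ∈ Icc (-(N : ℤ) + 1) ((N : ℤ) - 1), lqcfFun N K φF φ2F u j = f j)
      ∧ ∀ f : ℤ → ℝ, ∀ u : ℤ → ℝ, memU N u →
          (∀ j ∈ Icc (-(N : ℤ) + 1) ((N : ℤ) - 1), lqcfFun N K φF φ2F u j = f j) →
          ∀ ℓ ∈ Icc (-(N : ℤ) + 1) ((N : ℤ) - 1),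
            |D2 N u ℓ| ≤ (1 / (φF + 4 * φ2F)) *
              (Icc (-(N : ℤ) + 1) ((N : ℤ) - 1)).sup'
                (⟨0, by simp only [mem_Icc]; omega⟩) (fun j => |f j|))
    ∧ (φF + 4 * φ2F = 0 →
        ∃ v : ℤ → ℝ, memU N v ∧ v ≠ 0 ∧
          ∀ j ∈ Icc (-(N : ℤ) + 1) ((N : ℤ) - 1), lqcfFun N K φF φ2F v j = 0) := by
  refine ⟨fun hA => ⟨fun f _ => ?_, fun f u _ hf => ?_⟩, fun hA => exists_kernel hN hK2 hA⟩
  · obtain ⟨u, hu, hfu⟩ := exists_solution hN hK2 hφ2F hA f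
    refine ⟨u, ⟨hu, hfu⟩, ?_⟩
    rintro w ⟨hw, hfw⟩
    have h0 : w + (-1 : ℝ) • u = 0 := by
      refine eq_zero_of_lqcfFun_eq_zero hN hK2 hφ2F hA (fun j hj => ?_) fun j hj => ?_
      · simp [hw j hj, hu j hj]
      · rw [lqcfFun_add, lqcfFun_smul, hfw j hj, hfu j hj]
        ring
    rw [neg_one_smul, ← sub_eq_add_neg] at h0
    exact sub_eq_zero.1 h0
  · refine D2_bound hK2 hφ2F hA fun j hj => ?_
    rw [hf j hj]
    exact le_sup' (fun j => |f j|) hj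

end
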